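/- Sine bounds for square roots of non-square integers: Let q be a positive integer that is not a perfect square and set ν := √q. Then (ν+1)·|sin(νπ)| > 1 and ν·|sin(νπ)| > 2/3; equivalently 1/((ν+1)|sin(νπ)|) < 1 and 1/(ν|sin(νπ)|) < 3/2. -/

import Mathlib

noncomputable section

/-!
Let `m` be the integer nearest to `ν = √q`. Concavity of the sine on `[0, π / 2]` gives
`2 |ν - m| ≤ |sin (ν π)|`, while `|ν - m| (ν + m) = |q - m ^ 2|` is a positive integer, hence at
least `1`. As `m ≤ ν + 1 / 2`, it follows that `|sin (ν π)| ≥ 4 / (4 ν + 1)`, which exceeds both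
`1 / (ν + 1)` and, for `ν ≥ 1`, `2 / (3 ν)`.
-/

theorem two_mul_abs_sub_round_le_abs_sin_mul_pi (x : ℝ) :
    2 * |x - round x| ≤ |Real.sin (x * Real.pi)| := by
  have abs_mul_pi : |(x - round x) * Real.pi| = |x - round x| * Real.pi := by
    rw [abs_mul, abs_of_pos Real.pi_pos]
  have mul_pi_le : |(x - round x) * Real.pi| ≤ Real.pi / 2 := by
    rw [abs_mul_pi]
    linarith [mul_le_mul_of_nonneg_right (abs_sub_round x) Real.pi_pos.le]
  calc 2 * |x - round x|
      = 2 / Real.pi * |(x - round x) * Real.pi| := by rw [abs_mul_pi]; field_simp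
    _ ≤ |Real.sin ((x - round x) * Real.pi)| := Real.mul_abs_le_abs_sin mul_pi_le
    _ = |Real.sin (x * Real.pi)| := by
      rw [sub_mul, Real.sin_sub_int_mul_pi, abs_mul, abs_neg_one_zpow, one_mul]

theorem one_le_abs_sqrt_sub_mul_abs_sqrt_add {q : ℕ} {m : ℤ} (hm : m ^ 2 ≠ q) :
    1 ≤ |√(q : ℝ) - m| * |√(q : ℝ) + m| := by
  have one_le_abs_sub : 1 ≤ |(q : ℤ) - m ^ 2| := Int.one_le_abs (sub_ne_zero.mpr hm.symm)
  calc (1 : ℝ) ≤ |(q : ℝ) - (m : ℝ) ^ 2| := by exact_mod_cast one_le_abs_sub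
    _ = |√(q : ℝ) ^ 2 - (m : ℝ) ^ 2| := by rw [Real.sq_sqrt q.cast_nonneg]
    _ = |√(q : ℝ) - m| * |√(q : ℝ) + m| := by rw [sq_sub_sq, abs_mul, mul_comm]

theorem two_le_mul_abs_sqrt_sub_round {q : ℕ} (hq : ¬IsSquare q) :
    2 ≤ (4 * √(q : ℝ) + 1) * |√(q : ℝ) - round √(q : ℝ)| := by
  set ν := √(q : ℝ)
  have round_sq_ne : round ν ^ 2 ≠ (q : ℤ) := fun h ↦
    hq (Int.isSquare_natCast_iff.mp (h ▸ IsSquare.sq (round ν)))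
  have abs_add_round_le : |ν + round ν| ≤ 2 * ν + 1 / 2 := by
    have ν_nonneg : 0 ≤ ν := Real.sqrt_nonneg _
    rw [abs_le]
    constructor <;> linarith [sub_half_lt_round ν, round_le_add_half ν]
  calc (2 : ℝ) ≤ 2 * (|ν - round ν| * |ν + round ν|) := by
        linarith [one_le_abs_sqrt_sub_mul_abs_sqrt_add round_sq_ne]
    _ ≤ 2 * (|ν - round ν| * (2 * ν + 1 / 2)) := by gcongr
    _ = (4 * ν + 1) * |ν - round ν| := by ring

theorem four_le_mul_abs_sin_sqrt_mul_pi {q : ℕ} (hq : ¬IsSquare q) :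
    4 ≤ (4 * √(q : ℝ) + 1) * |Real.sin (√(q : ℝ) * Real.pi)| :=
  calc (4 : ℝ) ≤ (4 * √(q : ℝ) + 1) * (2 * |√(q : ℝ) - round √(q : ℝ)|) := by
        linarith [two_le_mul_abs_sqrt_sub_round hq]
    _ ≤ (4 * √(q : ℝ) + 1) * |Real.sin (√(q : ℝ) * Real.pi)| := by
      gcongr
      exact two_mul_abs_sub_round_le_abs_sin_mul_pi _

/-- Sine bounds for square roots of non-square integers. -/
theorem sine_bounds_sqrt_nonsquare
    (q : ℕ) (hq : 0 < q) (hns : ¬ ∃ n : ℕ, n ^ 2 = q) :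
    (Real.sqrt q + 1) * |Real.sin (Real.sqrt q * Real.pi)| > 1 ∧
    Real.sqrt q * |Real.sin (Real.sqrt q * Real.pi)| > 2 / 3 ∧
    ((Real.sqrt q + 1) * |Real.sin (Real.sqrt q * Real.pi)|)⁻¹ < 1 ∧
    (Real.sqrt q * |Real.sin (Real.sqrt q * Real.pi)|)⁻¹ < 3 / 2 := by
  have not_isSquare : ¬IsSquare q := fun h ↦
    hns (((isSquare_iff_exists_sq q).mp h).imp fun _ ↦ Eq.symm)
  have four_le := four_le_mul_abs_sin_sqrt_mul_pi not_isSquare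
  have one_le_sqrt : 1 ≤ √(q : ℝ) := Real.one_le_sqrt.mpr (by exact_mod_cast hq)
  set ν := √(q : ℝ)
  set s := |Real.sin (ν * Real.pi)|
  have s_pos : 0 < s := pos_of_mul_pos_right (by linarith) (by linarith : 0 ≤ 4 * ν + 1)
  have s_le : s ≤ ν * s := le_mul_of_one_le_left s_pos.le one_le_sqrt
  have one_lt : 1 < (ν + 1) * s := by linarith
  have two_thirds_lt : 2 / 3 < ν * s := by linarith
  refine ⟨one_lt, two_thirds_lt, inv_lt_one_of_one_lt₀ one_lt, ?_⟩
  exact inv_lt_of_inv_lt₀ (by norm_num) (by linarith)
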